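/- arXiv:1006.5097 — 2 statements merged into one kernel-verified Lean document; each statement's English description precedes it below -/
import Mathlib

section
/- Let k ≥ 1, let f : Fin k → ℝ, and let y, z : ℕ → Fin k be infinite color sequences that both have frequency vector f. Then every infinite color sequence x that is a shuffle of y and z has frequency vector f. -/
open Filter Topology

/-- Number of indices `i < n` with `x i = a`. -/
def cnt {k : ℕ} (x : ℕ → Fin k) (a : Fin k) (n : ℕ) : ℕ :=
  ((Finset.range n).filter fun i => x i = a).card

/-- Color `a` has frequency `r` in `x`. -/
def HasFreq {k : ℕ} (x : ℕ → Fin k) (a : Fin k) (r : ℝ) : Prop :=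
  Tendsto (fun n : ℕ => (cnt x a n : ℝ) / (n : ℝ)) atTop (𝓝 r)

/-- `x` has frequency vector `f`. -/
def HasFreqVector {k : ℕ} (x : ℕ → Fin k) (f : Fin k → ℝ) : Prop :=
  ∀ a : Fin k, HasFreq x a (f a)

/-- `s` is the infinite concatenation of the finite words `w 0, w 1, w 2, …`. -/
def IsConcat {k : ℕ} (w : ℕ → List (Fin k)) (s : ℕ → Fin k) : Prop :=
  Tendsto (fun n : ℕ => ∑ i ∈ Finset.range n, (w i).length) atTop atTop ∧
  ∀ (n j : ℕ) (hj : j < (w n).length),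
    s ((∑ i ∈ Finset.range n, (w i).length) + j) = (w n).get ⟨j, hj⟩

/-- `x` is a shuffle of `y` and `z`. -/
def IsShuffle {k : ℕ} (x y z : ℕ → Fin k) : Prop :=
  ∃ w : ℕ → List (Fin k),
    IsConcat w x ∧ IsConcat (fun n => w (2 * n)) y ∧
      IsConcat (fun n => w (2 * n + 1)) z

theorem cnt_succ_aux {k : ℕ} (s : ℕ → Fin k) (a : Fin k) (n : ℕ) :
    cnt s a (n + 1) = cnt s a n + if s n = a then 1 else 0 := by
  unfold cnt
  rw [Finset.range_add_one, Finset.filter_insert]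
  split_ifs with h
  · rw [Finset.card_insert_of_notMem (by simp)]
  · rfl

theorem cnt_step_aux {k : ℕ} (w : ℕ → List (Fin k)) (s : ℕ → Fin k) (a : Fin k)
    (h : IsConcat w s) (n : ℕ) (j : ℕ) (hj : j ≤ (w n).length) :
    cnt s a ((∑ i ∈ Finset.range n, (w i).length) + j) =
      cnt s a (∑ i ∈ Finset.range n, (w i).length) + ((w n).take j).count a := by
  induction j with
  | zero => simp
  | succ j ih =>
    have hj' : j < (w n).length := hj
    rw [← add_assoc, cnt_succ_aux, ih hj'.le, h.2 n j hj', List.take_succ_eq_append_getElem hj',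
      List.count_append, List.count_singleton]
    simp [add_assoc]

theorem cnt_sum_aux {k : ℕ} (w : ℕ → List (Fin k)) (s : ℕ → Fin k) (a : Fin k)
    (h : IsConcat w s) (n : ℕ) :
    cnt s a (∑ i ∈ Finset.range n, (w i).length) =
      ∑ i ∈ Finset.range n, (w i).count a := by
  induction n with
  | zero => simp [cnt]
  | succ n ih =>
    rw [Finset.sum_range_succ, cnt_step_aux w s a h n _ le_rfl, ih, Finset.sum_range_succ,
      List.take_length]

theorem sum_two_aux (g : ℕ → ℕ) (t : ℕ) :
    ∑ i ∈ Finset.range (2 * t), g i =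
      ∑ i ∈ Finset.range t, g (2 * i) + ∑ i ∈ Finset.range t, g (2 * i + 1) := by
  induction t with
  | zero => simp
  | succ t ih =>
    rw [show 2 * (t + 1) = 2 * t + 1 + 1 by ring, Finset.sum_range_succ, Finset.sum_range_succ,
      ih, Finset.sum_range_succ, Finset.sum_range_succ]
    ring

theorem locate_aux {k : ℕ} (w : ℕ → List (Fin k)) (s : ℕ → Fin k)
    (h : IsConcat w s) (n : ℕ) :
    ∃ m j, j ≤ (w m).length ∧ n = (∑ i ∈ Finset.range m, (w i).length) + j := by
  classical
  have hex : ∃ m, n < ∑ i ∈ Finset.range m, (w i).length :=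
    (h.1.eventually (eventually_gt_atTop n)).exists
  obtain ⟨m, hm⟩ : ∃ m, Nat.find hex = m := ⟨_, rfl⟩
  have h1 := Nat.find_spec hex
  rw [hm] at h1
  cases m with
  | zero => simp at h1
  | succ m =>
    have h2 := Nat.find_min hex (m := m) (by omega)
    rw [Finset.sum_range_succ] at h1
    exact ⟨m, n - ∑ i ∈ Finset.range m, (w i).length, by omega, by omega⟩

theorem split_aux {k : ℕ} (x y z : ℕ → Fin k) (hx : IsShuffle x y z) (a : Fin k) (n : ℕ) :
    ∃ p q, n = p + q ∧ cnt x a n = cnt y a p + cnt z a q := by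
  obtain ⟨w, hwx, hwy, hwz⟩ := hx
  obtain ⟨m, j, hj, rfl⟩ := locate_aux w x hwx n
  rw [cnt_step_aux w x a hwx m j hj, cnt_sum_aux w x a hwx]
  obtain ⟨t, rfl | rfl⟩ : ∃ t, m = 2 * t ∨ m = 2 * t + 1 := ⟨m / 2, by omega⟩
  · refine ⟨(∑ i ∈ Finset.range t, (w (2 * i)).length) + j,
      ∑ i ∈ Finset.range t, (w (2 * i + 1)).length, ?_, ?_⟩
    · rw [sum_two_aux]; ring
    · have e1 := cnt_step_aux _ y a hwy t j hj
      have e2 := cnt_sum_aux _ y a hwy t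
      have e3 := cnt_sum_aux _ z a hwz t
      have e4 := sum_two_aux (fun i => (w i).count a) t
      omega
  · refine ⟨∑ i ∈ Finset.range (t + 1), (w (2 * i)).length,
      (∑ i ∈ Finset.range t, (w (2 * i + 1)).length) + j, ?_, ?_⟩
    · rw [Finset.sum_range_succ, sum_two_aux, Finset.sum_range_succ]; ring
    · have e1 := cnt_step_aux _ z a hwz t j hj
      have e2 := cnt_sum_aux _ y a hwy (t + 1)
      have e3 := cnt_sum_aux _ z a hwz t
      have e4 := sum_two_aux (fun i => (w i).count a) t
      have e5 := Finset.sum_range_succ (fun i => (w i).count a) (2 * t)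
      have e6 := Finset.sum_range_succ (fun i => (w (2 * i)).count a) t
      omega

theorem bound_aux {k : ℕ} (x : ℕ → Fin k) (a : Fin k) (r : ℝ) (h : HasFreq x a r)
    (e : ℝ) (he : 0 < e) : ∃ C : ℝ, 0 ≤ C ∧ ∀ n : ℕ, |(cnt x a n : ℝ) - r * n| ≤ e * n + C := by
  obtain ⟨N, hN⟩ := Metric.tendsto_atTop.1 h e he
  refine ⟨∑ i ∈ Finset.range (N + 1), |(cnt x a i : ℝ) - r * i|,
    Finset.sum_nonneg fun _ _ => abs_nonneg _, fun n => ?_⟩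
  by_cases hn : n < N + 1
  · have := Finset.single_le_sum (f := fun i : ℕ => |(cnt x a i : ℝ) - r * i|)
      (fun _ _ => abs_nonneg _) (Finset.mem_range.2 hn)
    have h0 : 0 ≤ e * n := by positivity
    linarith
  · have hpos : (0 : ℝ) < n := by exact_mod_cast (by omega : 0 < n)
    have h1 := hN n (by omega)
    rw [Real.dist_eq] at h1
    have h2 : (cnt x a n : ℝ) - r * n = ((cnt x a n : ℝ) / n - r) * n := by
      field_simp
    have h3 : 0 ≤ ∑ i ∈ Finset.range (N + 1), |(cnt x a i : ℝ) - r * i| :=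
      Finset.sum_nonneg fun _ _ => abs_nonneg _
    rw [h2, abs_mul, abs_of_pos hpos]
    nlinarith

theorem shuffle_of_freq_has_freq {k : ℕ} (hk : 1 ≤ k) (f : Fin k → ℝ)
    (y z : ℕ → Fin k) (hy : HasFreqVector y f) (hz : HasFreqVector z f)
    (x : ℕ → Fin k) (hx : IsShuffle x y z) : HasFreqVector x f := by
  intro a
  refine Metric.tendsto_atTop.2 fun e he => ?_
  obtain ⟨C, hC0, hC⟩ := bound_aux y a (f a) (hy a) (e / 2) (by positivity)
  obtain ⟨D, hD0, hD⟩ := bound_aux z a (f a) (hz a) (e / 2) (by positivity)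
  obtain ⟨N, hN⟩ := exists_nat_gt (2 * (C + D) / e)
  refine ⟨N + 1, fun n hn => ?_⟩
  have hpos : (0 : ℝ) < n := by exact_mod_cast (by omega : 0 < n)
  have hNn : (N : ℝ) ≤ n := by exact_mod_cast (by omega : N ≤ n)
  obtain ⟨p, q, hpq, hc⟩ := split_aux x y z hx a n
  have h1 := hC p
  have h2 := hD q
  have hpq' : (n : ℝ) = p + q := by exact_mod_cast hpq
  have hc' : (cnt x a n : ℝ) = cnt y a p + cnt z a q := by exact_mod_cast hc
  have h3 : 2 * (C + D) < n * e := (div_lt_iff₀ he).1 (hN.trans_le hNn)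
  have h4 : (cnt x a n : ℝ) / n - f a = ((cnt x a n : ℝ) - f a * n) / n := by
    field_simp
  rw [Real.dist_eq, h4, abs_div, abs_of_pos hpos, div_lt_iff₀ hpos]
  have h5 : (cnt x a n : ℝ) - f a * n
      = ((cnt y a p : ℝ) - f a * p) + ((cnt z a q : ℝ) - f a * q) := by
    rw [hc', hpq']; ring
  rw [h5]
  have h6 := abs_add_le ((cnt y a p : ℝ) - f a * p) ((cnt z a q : ℝ) - f a * q)
  have h7 : e * (n : ℝ) = e * p + e * q := by rw [hpq']; ring
  linarith
end

section
/- Let k ≥ 1 and let y, z : ℕ → Fin k be balanced infinite color sequences. Then every infinite color sequence x that is a shuffle of y and z is balanced. -/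
open Filter Topology

/-- Every color has frequency `1/k`. -/
def BalancedSeq {k : ℕ} (x : ℕ → Fin k) : Prop :=
  ∀ a : Fin k, HasFreq x a (1 / (k : ℝ))

lemma aux_cnt_succ {k : ℕ} (x : ℕ → Fin k) (a : Fin k) (n : ℕ) :
    cnt x a (n + 1) = cnt x a n + if x n = a then 1 else 0 := by
  unfold cnt
  rw [Finset.range_add_one, Finset.filter_insert]
  split_ifs with h
  · rw [Finset.card_insert_of_notMem (by simp)]
  · simp

lemma aux_cnt_le {k : ℕ} (x : ℕ → Fin k) (a : Fin k) (n : ℕ) : cnt x a n ≤ n := by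
  unfold cnt
  exact (Finset.card_filter_le _ _).trans (by simp)

lemma aux_concat {k : ℕ} {w : ℕ → List (Fin k)} {s : ℕ → Fin k} (h : IsConcat w s)
    (a : Fin k) (m j : ℕ) (hj : j ≤ (w m).length) :
    cnt s a ((∑ i ∈ Finset.range m, (w i).length) + j)
      = cnt s a (∑ i ∈ Finset.range m, (w i).length) + ((w m).take j).count a := by
  induction j with
  | zero => simp
  | succ j ih =>
    have hlt : j < (w m).length := hj
    rw [← add_assoc, aux_cnt_succ, ih hlt.le, h.2 m j hlt, List.take_add_one,
      List.getElem?_eq_getElem hlt, List.count_append, Option.toList_some, List.count_singleton,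
      add_assoc]
    simp only [List.get_eq_getElem, beq_iff_eq]

lemma aux_full {k : ℕ} {w : ℕ → List (Fin k)} {s : ℕ → Fin k} (h : IsConcat w s)
    (a : Fin k) (m : ℕ) :
    cnt s a (∑ i ∈ Finset.range (m + 1), (w i).length)
      = cnt s a (∑ i ∈ Finset.range m, (w i).length) + (w m).count a := by
  rw [Finset.sum_range_succ, aux_concat h a m _ le_rfl, List.take_length]

lemma aux_even {k : ℕ} {w : ℕ → List (Fin k)} {x y z : ℕ → Fin k} (hx : IsConcat w x)
    (hy : IsConcat (fun n => w (2 * n)) y) (hz : IsConcat (fun n => w (2 * n + 1)) z)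
    (a : Fin k) (t : ℕ) :
    (∑ i ∈ Finset.range (2 * t), (w i).length) =
      (∑ i ∈ Finset.range t, (w (2 * i)).length) +
      (∑ i ∈ Finset.range t, (w (2 * i + 1)).length) ∧
    cnt x a (∑ i ∈ Finset.range (2 * t), (w i).length) =
      cnt y a (∑ i ∈ Finset.range t, (w (2 * i)).length) +
      cnt z a (∑ i ∈ Finset.range t, (w (2 * i + 1)).length) := by
  induction t with
  | zero => simp [cnt]
  | succ t ih =>
    have h1 := aux_full hy a t
    have h2 := aux_full hz a t
    have h3 := aux_full hx a (2 * t)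
    have h4 := aux_full hx a (2 * t + 1)
    have e : 2 * (t + 1) = 2 * t + 1 + 1 := by ring
    rw [e]
    constructor
    · simp only [Finset.sum_range_succ]
      omega
    · omega

lemma aux_split {k : ℕ} {x y z : ℕ → Fin k} (h : IsShuffle x y z) (a : Fin k) (n : ℕ) :
    ∃ p q, p + q = n ∧ cnt x a n = cnt y a p + cnt z a q := by
  obtain ⟨w, hx, hy, hz⟩ := h
  have hex : ∃ m, n < ∑ i ∈ Finset.range m, (w i).length :=
    (hx.1.eventually_gt_atTop n).exists
  obtain ⟨m, hm1, hm2⟩ : ∃ m, (∑ i ∈ Finset.range m, (w i).length) ≤ n ∧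
      n < ∑ i ∈ Finset.range (m + 1), (w i).length := by
    classical
    have hs := Nat.find_spec hex
    have hmin := fun m => Nat.find_min (H := hex) (m := m)
    cases hf : Nat.find hex with
    | zero => rw [hf] at hs; simp at hs
    | succ m =>
      rw [hf] at hs
      exact ⟨m, not_lt.mp (hmin m (by omega)), hs⟩
  obtain ⟨j, rfl⟩ := Nat.exists_eq_add_of_le hm1
  rw [Finset.sum_range_succ] at hm2
  have hj : j ≤ (w m).length := by omega
  have hc := aux_concat hx a m j hj
  rcases Nat.even_or_odd' m with ⟨t, rfl | rfl⟩
  · have h1 := aux_even hx hy hz a t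
    have h2 := aux_concat hy a t j hj
    refine ⟨(∑ i ∈ Finset.range t, (w (2 * i)).length) + j,
      ∑ i ∈ Finset.range t, (w (2 * i + 1)).length, ?_, ?_⟩
    · omega
    · omega
  · have h1 := aux_even hx hy hz a t
    have h2 := aux_concat hz a t j hj
    have h3 := aux_full hx a (2 * t)
    have h4 := aux_full hy a t
    refine ⟨∑ i ∈ Finset.range (t + 1), (w (2 * i)).length,
      (∑ i ∈ Finset.range t, (w (2 * i + 1)).length) + j, ?_, ?_⟩
    · simp only [Finset.sum_range_succ]; omega
    · omega

lemma aux_bound {k : ℕ} {x : ℕ → Fin k} {a : Fin k} {r : ℝ} (h : HasFreq x a r)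
    (ε : ℝ) (hε : 0 < ε) :
    ∃ C : ℝ, ∀ n : ℕ, |(cnt x a n : ℝ) - r * n| ≤ ε * n + C := by
  obtain ⟨N, hN⟩ := Metric.tendsto_atTop.mp h ε hε
  refine ⟨(1 + |r|) * N, fun n => ?_⟩
  have hn0 : (0 : ℝ) ≤ n := n.cast_nonneg
  have hN0 : (0 : ℝ) ≤ (1 + |r|) * N := by positivity
  rcases Nat.eq_zero_or_pos n with rfl | hpos
  · simpa [cnt] using hN0
  have hp : (0 : ℝ) < n := by exact_mod_cast hpos
  rcases le_total N n with hle | hle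
  · have := hN n hle
    rw [Real.dist_eq] at this
    have e : (cnt x a n : ℝ) - r * n = ((cnt x a n : ℝ) / n - r) * n := by
      field_simp
    rw [e, abs_mul, abs_of_pos hp]
    nlinarith
  · have h1 : (cnt x a n : ℝ) ≤ n := by exact_mod_cast aux_cnt_le x a n
    have h2 : (n : ℝ) ≤ N := by exact_mod_cast hle
    calc |(cnt x a n : ℝ) - r * n| ≤ |(cnt x a n : ℝ)| + |r * n| := abs_sub _ _
      _ = cnt x a n + |r| * n := by rw [abs_mul, Nat.abs_cast, Nat.abs_cast]
      _ ≤ (1 + |r|) * N := by nlinarith [abs_nonneg r]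
      _ ≤ ε * n + (1 + |r|) * N := by nlinarith

lemma aux_conv {k : ℕ} {x : ℕ → Fin k} {a : Fin k} {r : ℝ}
    (h : ∀ ε : ℝ, 0 < ε → ∃ C : ℝ, ∀ n : ℕ, |(cnt x a n : ℝ) - r * n| ≤ ε * n + C) :
    HasFreq x a r := by
  refine Metric.tendsto_atTop.mpr fun ε hε => ?_
  obtain ⟨C, hC⟩ := h (ε / 2) (by positivity)
  obtain ⟨N, hN⟩ := exists_nat_gt (C / (ε / 2))
  refine ⟨N + 1, fun n hn => ?_⟩
  have hp : (0 : ℝ) < n := by exact_mod_cast (by omega : 0 < n)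
  have hNn : (N : ℝ) ≤ n := by exact_mod_cast (by omega : N ≤ n)
  rw [div_lt_iff₀ (by positivity)] at hN
  rw [Real.dist_eq]
  have e : (cnt x a n : ℝ) / n - r = ((cnt x a n : ℝ) - r * n) / n := by
    field_simp
  rw [e, abs_div, abs_of_pos hp, div_lt_iff₀ hp]
  nlinarith [hC n]

theorem shuffle_of_balanced_is_balanced {k : ℕ} (hk : 1 ≤ k)
    (y z : ℕ → Fin k) (hy : BalancedSeq y) (hz : BalancedSeq z)
    (x : ℕ → Fin k) (hx : IsShuffle x y z) : BalancedSeq x := by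
  intro a
  refine aux_conv fun ε hε => ?_
  obtain ⟨C, hC⟩ := aux_bound (hy a) ε hε
  obtain ⟨D, hD⟩ := aux_bound (hz a) ε hε
  refine ⟨C + D, fun n => ?_⟩
  obtain ⟨p, q, rfl, h⟩ := aux_split hx a n
  have h1 := hC p
  have h2 := hD q
  rw [h]
  push_cast
  rw [abs_le] at *
  constructor <;> nlinarith
end
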